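/- (Solution 3B of Table 1.) Let a ∈ ℂ and let P(λ,t) = 3λ⁴ − 4λ³ − 4λ³t + 6λ²t − t². Let U ⊆ ℂ be a nonempty open set and λ : U → ℂ a twice differentiable function such that for every t ∈ U one has t ∉ {0,1}, λ(t) ∉ {0,1,t}, P(λ(t),t) = 0, and ∂P/∂λ(λ(t),t) ≠ 0. Then λ is a solution of PVI_α with α = (9a, a, a, a). -/

import Mathlib

/-- `l : ℂ → ℂ` (viewed as a function on `U`) is a solution of the Painlevé VI equation
`PVI_α` with parameter `α = (α₀, α₁, α₂, α₃)`:  `l` is twice differentiable on `U`, for every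
`t ∈ U` one has `t ∉ {0,1}`, `l t ∉ {0,1,t}`, and the Painlevé VI ODE holds on `U`. -/
def IsPVISolution (α : Fin 4 → ℂ) (U : Set ℂ) (l : ℂ → ℂ) : Prop :=
  (∀ t ∈ U, DifferentiableAt ℂ l t) ∧
  (∀ t ∈ U, DifferentiableAt ℂ (deriv l) t) ∧
  (∀ t ∈ U, t ≠ 0 ∧ t ≠ 1 ∧ l t ≠ 0 ∧ l t ≠ 1 ∧ l t ≠ t) ∧
  (∀ t ∈ U, deriv (deriv l) t =
    (1 / 2) * (1 / l t + 1 / (l t - 1) + 1 / (l t - t)) * (deriv l t) ^ 2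
      - (1 / t + 1 / (t - 1) + 1 / (l t - t)) * deriv l t
      + (l t * (l t - 1) * (l t - t)) / (t ^ 2 * (t - 1) ^ 2) *
        (α 0 - α 1 * t / (l t) ^ 2 + α 2 * (t - 1) / (l t - 1) ^ 2
          + (1 / 2 - α 3) * (t * (t - 1)) / (l t - t) ^ 2))

open Polynomial

/-- The polynomial `P(λ, t)` of the table, as a polynomial in `λ` (the variable `X`)
with coefficients depending on `t`. -/
noncomputable def P (t : ℂ) : Polynomial ℂ := C 3 * X ^ 4 - C 4 * X ^ 3 - C (4 * t) * X ^ 3 + C (6 * t) * X ^ 2 - C (t ^ 2)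

/-!
Since `P(x, t) = 4x · x(x - 1)(x - t) - (x² - t)²`, the duplication formula on the Legendre curve
`y² = x(x - 1)(x - t)` shows that the roots of `P` are the abscissas of its points of order three.
The curve `P = 0` is rational: with `u = (x - t) / (x(x - 1))` it is parametrized by
`x = (u + 1)² / (4u)` and `t = (u + 1)³(3 - u) / (16u)`. As `dt/du` vanishes only over `t = 0, 1`,
a continuous branch `u(t)` is differentiable, and `dx/dt`, `d²x/dt²` are rational functions of `u`.
Painlevé VI thus becomes an identity between rational functions of `u`, which splits in two: `x`
solves the equation with parameter zero (Picard's case), and the potential with parameter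
`(9, 1, 1, 1)` vanishes along the curve, so any multiple of it may be added.
-/

open Topology

/-- The `α`-dependent factor of the Painlevé VI equation, linear in `α`. The summand `1 / 2` of the
equation, which does not involve `α`, is left out. -/
def pviPotential {K : Type*} [Field K] (α : Fin 4 → K) (t x : K) : K :=
  α 0 - α 1 * t / x ^ 2 + α 2 * (t - 1) / (x - 1) ^ 2 - α 3 * (t * (t - 1)) / (x - t) ^ 2

namespace IsPVISolution

variable {α β : Fin 4 → ℂ} {U : Set ℂ} {l l' : ℂ → ℂ}

theorem congr (h : IsPVISolution α U l) (hU : IsOpen U) (hll' : U.EqOn l l') :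
    IsPVISolution α U l' := by
  obtain ⟨hdiff, hdiff2, hreg, hode⟩ := h
  have hnhds {t : ℂ} (ht : t ∈ U) : l' =ᶠ[𝓝 t] l := hll'.symm.eventuallyEq_of_mem (hU.mem_nhds ht)
  refine ⟨fun t ht => (hdiff t ht).congr_of_eventuallyEq (hnhds ht),
    fun t ht => (hdiff2 t ht).congr_of_eventuallyEq (hnhds ht).deriv,
    fun t ht => hll' ht ▸ hreg t ht, fun t ht => ?_⟩
  rw [(hnhds ht).deriv.deriv_eq, (hnhds ht).deriv_eq, ← hll' ht]
  exact hode t ht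

theorem add_smul (h : IsPVISolution α U l) (hβ : ∀ t ∈ U, pviPotential β t (l t) = 0) (c : ℂ) :
    IsPVISolution (α + c • β) U l := by
  obtain ⟨hdiff, hdiff2, hreg, hode⟩ := h
  refine ⟨hdiff, hdiff2, hreg, fun t ht => ?_⟩
  have hpot := hβ t ht
  simp only [pviPotential] at hpot
  simp only [Pi.add_apply, Pi.smul_apply, smul_eq_mul]
  linear_combination hode t ht
    - (l t * (l t - 1) * (l t - t)) / (t ^ 2 * (t - 1) ^ 2) * c * hpot

end IsPVISolution

theorem eval_P (t x : ℂ) :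
    (P t).eval x = 4 * x * (x * (x - 1) * (x - t)) - (x ^ 2 - t) ^ 2 := by
  simp only [P, eval_sub, eval_add, eval_mul, eval_pow, eval_C, eval_X]
  ring

namespace ThreeTorsion

section Field

variable {K : Type*} [Field K]

/-- The abscissa of a point of order three on a Legendre curve, as a function of the parameter
`u = (x - t) / (x (x - 1))`. -/
def abscissa (u : K) : K := (u + 1) ^ 2 / (4 * u)

/-- The modulus `t` of the Legendre curve `y² = x (x - 1) (x - t)` whose point of order three has
parameter `u = (x - t) / (x (x - 1))`. -/
def modulus (u : K) : K := (u + 1) ^ 3 * (3 - u) / (16 * u)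

/-- The rational parameter of a point of order three with abscissa `x` on the Legendre curve with
modulus `t`. -/
def param (t x : K) : K := (x - t) / (x * (x - 1))

theorem ne_of_duplication {t x : K} (ht0 : t ≠ 0) (ht1 : t ≠ 1)
    (h : (x ^ 2 - t) ^ 2 = 4 * x * (x * (x - 1) * (x - t))) : x ≠ 0 ∧ x ≠ 1 ∧ x ≠ t := by
  have hsq (hx : x * (x - 1) * (x - t) = 0) : x ^ 2 = t := by
    rw [hx, mul_zero] at h
    exact sub_eq_zero.mp (pow_eq_zero_iff two_ne_zero |>.mp h)
  refine ⟨?_, ?_, ?_⟩ <;> rintro rfl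
  · exact ht0 (by simpa using (hsq (by ring)).symm)
  · exact ht1 (by simpa using (hsq (by ring)).symm)
  · exact ht1 (mul_left_cancel₀ ht0 (by linear_combination hsq (by ring)))

theorem ne_zero_of_modulus_ne_zero {u : K} (h : modulus u ≠ 0) : u ≠ 0 := by
  rintro rfl
  simp [modulus] at h

variable [CharZero K]

theorem abscissa_param {t x : K} (hx0 : x ≠ 0) (hx1 : x ≠ 1) (hxt : x ≠ t)
    (h : (x ^ 2 - t) ^ 2 = 4 * x * (x * (x - 1) * (x - t))) : abscissa (param t x) = x := by
  have hx1' := sub_ne_zero.mpr hx1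
  have hxt' := sub_ne_zero.mpr hxt
  simp only [abscissa, param]
  field_simp
  linear_combination h

theorem modulus_eq_abscissa_sub {u : K} (hu : u ≠ 0) :
    modulus u = abscissa u - u * (abscissa u * (abscissa u - 1)) := by
  simp only [modulus, abscissa]
  field_simp
  ring

theorem modulus_param {t x : K} (hx0 : x ≠ 0) (hx1 : x ≠ 1) (hxt : x ≠ t)
    (h : (x ^ 2 - t) ^ 2 = 4 * x * (x * (x - 1) * (x - t))) : modulus (param t x) = t := by
  have hx1' := sub_ne_zero.mpr hx1
  have hu : param t x ≠ 0 := div_ne_zero (sub_ne_zero.mpr hxt) (mul_ne_zero hx0 hx1')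
  rw [modulus_eq_abscissa_sub hu, abscissa_param hx0 hx1 hxt h, param,
    div_mul_cancel₀ _ (mul_ne_zero hx0 hx1'), sub_sub_cancel]

theorem abscissa_sub_one {u : K} (hu : u ≠ 0) : abscissa u - 1 = (u - 1) ^ 2 / (4 * u) := by
  rw [abscissa]
  field_simp
  ring

theorem modulus_sub_one {u : K} (hu : u ≠ 0) :
    modulus u - 1 = -((u - 1) ^ 3 * (u + 3)) / (16 * u) := by
  rw [modulus]
  field_simp
  ring

theorem abscissa_sub_modulus {u : K} (hu : u ≠ 0) :
    abscissa u - modulus u = (1 - u ^ 2) ^ 2 / (16 * u) := by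
  rw [abscissa, modulus]
  field_simp
  ring

theorem factors_ne_zero {u : K} (h0 : modulus u ≠ 0) (h1 : modulus u ≠ 1) :
    u + 1 ≠ 0 ∧ 3 - u ≠ 0 ∧ u - 1 ≠ 0 ∧ u + 3 ≠ 0 := by
  have hm1 := sub_ne_zero.mpr h1
  rw [modulus_sub_one (ne_zero_of_modulus_ne_zero h0)] at hm1
  rw [modulus] at h0
  refine ⟨?_, ?_, ?_, ?_⟩ <;> intro h <;> simp [h] at h0 hm1

theorem one_sub_sq_ne_zero {u : K} (h0 : modulus u ≠ 0) (h1 : modulus u ≠ 1) :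
    1 - u ^ 2 ≠ 0 := by
  obtain ⟨hu1, -, hu1', -⟩ := factors_ne_zero h0 h1
  rw [show 1 - u ^ 2 = -((u + 1) * (u - 1)) by ring]
  exact neg_ne_zero.mpr (mul_ne_zero hu1 hu1')

theorem abscissa_ne {u : K} (h0 : modulus u ≠ 0) (h1 : modulus u ≠ 1) :
    abscissa u ≠ 0 ∧ abscissa u ≠ 1 ∧ abscissa u ≠ modulus u := by
  have hu := ne_zero_of_modulus_ne_zero h0
  obtain ⟨hu1, -, hu1', -⟩ := factors_ne_zero h0 h1
  have hu2 := one_sub_sq_ne_zero h0 h1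
  refine ⟨?_, sub_ne_zero.mp ?_, sub_ne_zero.mp ?_⟩
  · simp [abscissa, hu, hu1]
  · simp [abscissa_sub_one hu, hu, hu1']
  · simp [abscissa_sub_modulus hu, hu, hu2]

theorem pviPotential_eq_zero {u : K} (h0 : modulus u ≠ 0) (h1 : modulus u ≠ 1) :
    pviPotential ![9, 1, 1, 1] (modulus u) (abscissa u) = 0 := by
  have hu := ne_zero_of_modulus_ne_zero h0
  obtain ⟨hu1, -, hu1', -⟩ := factors_ne_zero h0 h1
  have hu2 := one_sub_sq_ne_zero h0 h1
  simp only [pviPotential, Matrix.cons_val, abscissa_sub_one hu, modulus_sub_one hu,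
    abscissa_sub_modulus hu]
  simp only [abscissa, modulus]
  field_simp
  ring

theorem picard_identity {u : K} (h0 : modulus u ≠ 0) (h1 : modulus u ≠ 1) :
    -(128 * u ^ 3 / (9 * (1 - u ^ 2) ^ 4)) =
      (1 / 2) * (1 / abscissa u + 1 / (abscissa u - 1) + 1 / (abscissa u - modulus u)) *
          (4 / (3 * (1 - u ^ 2))) ^ 2
        - (1 / modulus u + 1 / (modulus u - 1) + 1 / (abscissa u - modulus u)) *
          (4 / (3 * (1 - u ^ 2)))
        + (abscissa u * (abscissa u - 1) * (abscissa u - modulus u)) /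
            (modulus u ^ 2 * (modulus u - 1) ^ 2) *
          (1 / 2 * (modulus u * (modulus u - 1)) / (abscissa u - modulus u) ^ 2) := by
  have hu := ne_zero_of_modulus_ne_zero h0
  obtain ⟨hu1, hu3, hu1', hu3'⟩ := factors_ne_zero h0 h1
  have hu2 := one_sub_sq_ne_zero h0 h1
  simp only [abscissa_sub_one hu, modulus_sub_one hu, abscissa_sub_modulus hu]
  simp only [abscissa, modulus]
  field_simp
  ring

end Field

section Deriv

variable {𝕜 : Type*} [NontriviallyNormedField 𝕜] [CharZero 𝕜]

theorem hasDerivAt_abscissa {u : 𝕜} (hu : u ≠ 0) :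
    HasDerivAt abscissa (-(1 - u ^ 2) / (4 * u ^ 2)) u := by
  have h := (((hasDerivAt_id u).add_const 1).pow 2).div ((hasDerivAt_id u).const_mul 4)
    (mul_ne_zero (by norm_num) hu)
  refine h.congr_deriv ?_
  simp only [id_eq, Pi.pow_apply]
  field_simp
  ring

theorem hasDerivAt_modulus {u : 𝕜} (hu : u ≠ 0) :
    HasDerivAt modulus (-(3 * (1 - u ^ 2) ^ 2) / (16 * u ^ 2)) u := by
  have h := ((((hasDerivAt_id u).add_const 1).pow 3).mul ((hasDerivAt_id u).const_sub 3)).div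
    ((hasDerivAt_id u).const_mul 16) (mul_ne_zero (by norm_num) hu)
  refine h.congr_deriv ?_
  simp only [id_eq, Pi.pow_apply, Pi.mul_apply]
  field_simp
  ring

variable {U : Set 𝕜} {v : 𝕜 → 𝕜} {t : 𝕜}

theorem hasDerivAt_modulus_section (hU : IsOpen U) (hv : ContinuousOn v U)
    (hmod : ∀ s ∈ U, modulus (v s) = s) (ht : t ∈ U) (h0 : t ≠ 0) (h1 : t ≠ 1) :
    HasDerivAt v (-(16 * v t ^ 2 / (3 * (1 - v t ^ 2) ^ 2))) t := by
  rw [← hmod t ht] at h0 h1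
  have hu := ne_zero_of_modulus_ne_zero h0
  have hu2 := one_sub_sq_ne_zero h0 h1
  have hinv := (hasDerivAt_modulus hu).of_local_left_inverse (hv.continuousAt (hU.mem_nhds ht))
    (by simp [hu, hu2]) (Filter.eventually_of_mem (hU.mem_nhds ht) hmod)
  exact hinv.congr_deriv (by simp [neg_div, inv_neg])

theorem hasDerivAt_abscissa_comp_section (hU : IsOpen U) (hv : ContinuousOn v U)
    (hmod : ∀ s ∈ U, modulus (v s) = s) (ht : t ∈ U) (h0 : t ≠ 0) (h1 : t ≠ 1) :
    HasDerivAt (abscissa ∘ v) (4 / (3 * (1 - v t ^ 2))) t := by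
  have hv' := hasDerivAt_modulus_section hU hv hmod ht h0 h1
  rw [← hmod t ht] at h0 h1
  have hu := ne_zero_of_modulus_ne_zero h0
  have hu2 := one_sub_sq_ne_zero h0 h1
  refine ((hasDerivAt_abscissa hu).comp t hv').congr_deriv ?_
  field_simp
  norm_num

theorem hasDerivAt_deriv_abscissa_comp_section (hU : IsOpen U) (hU0 : 0 ∉ U) (hU1 : 1 ∉ U)
    (hv : ContinuousOn v U) (hmod : ∀ s ∈ U, modulus (v s) = s) (ht : t ∈ U) :
    HasDerivAt (deriv (abscissa ∘ v)) (-(128 * v t ^ 3 / (9 * (1 - v t ^ 2) ^ 4))) t := by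
  have hderiv {s : 𝕜} (hs : s ∈ U) : deriv (abscissa ∘ v) s = 4 / (3 * (1 - v s ^ 2)) :=
    (hasDerivAt_abscissa_comp_section hU hv hmod hs (ne_of_mem_of_not_mem hs hU0)
      (ne_of_mem_of_not_mem hs hU1)).deriv
  have h0 := ne_of_mem_of_not_mem ht hU0
  have h1 := ne_of_mem_of_not_mem ht hU1
  have hv' := hasDerivAt_modulus_section hU hv hmod ht h0 h1
  rw [← hmod t ht] at h0 h1
  have hu2 := one_sub_sq_ne_zero h0 h1
  have hquot := (hasDerivAt_const t (4 : 𝕜)).div (((hv'.pow 2).const_sub 1).const_mul 3)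
    (mul_ne_zero three_ne_zero hu2)
  refine (hquot.congr_of_eventuallyEq ?_).congr_deriv ?_
  · filter_upwards [hU.mem_nhds ht] with s hs using hderiv hs
  · simp only [Pi.pow_apply, Nat.cast_ofNat]
    field_simp
    ring

end Deriv

variable {U : Set ℂ}

theorem isPVISolution_zero_abscissa_comp {v : ℂ → ℂ} (hU : IsOpen U) (hU0 : 0 ∉ U) (hU1 : 1 ∉ U)
    (hv : ContinuousOn v U) (hmod : ∀ s ∈ U, modulus (v s) = s) :
    IsPVISolution 0 U (abscissa ∘ v) := by
  have h0 {t : ℂ} (ht : t ∈ U) : t ≠ 0 := ne_of_mem_of_not_mem ht hU0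
  have h1 {t : ℂ} (ht : t ∈ U) : t ≠ 1 := ne_of_mem_of_not_mem ht hU1
  have hd {t : ℂ} (ht : t ∈ U) :=
    hasDerivAt_abscissa_comp_section hU hv hmod ht (h0 ht) (h1 ht)
  have hd2 {t : ℂ} (ht : t ∈ U) :=
    hasDerivAt_deriv_abscissa_comp_section hU hU0 hU1 hv hmod ht
  have hm0 {t : ℂ} (ht : t ∈ U) : modulus (v t) ≠ 0 := (hmod t ht).trans_ne (h0 ht)
  have hm1 {t : ℂ} (ht : t ∈ U) : modulus (v t) ≠ 1 := (hmod t ht).trans_ne (h1 ht)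
  refine ⟨fun t ht => (hd ht).differentiableAt, fun t ht => (hd2 ht).differentiableAt,
    fun t ht => ⟨h0 ht, h1 ht, ?_⟩, fun t ht => ?_⟩
  · simpa only [Function.comp_apply, hmod t ht] using abscissa_ne (hm0 ht) (hm1 ht)
  · rw [(hd2 ht).deriv, (hd ht).deriv]
    simpa [hmod t ht] using picard_identity (hm0 ht) (hm1 ht)

theorem isPVISolution_abscissa_comp {v : ℂ → ℂ} (hU : IsOpen U) (hU0 : 0 ∉ U) (hU1 : 1 ∉ U)
    (hv : ContinuousOn v U) (hmod : ∀ s ∈ U, modulus (v s) = s) (a : ℂ) :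
    IsPVISolution ![9 * a, a, a, a] U (abscissa ∘ v) := by
  have hpot (t : ℂ) (ht : t ∈ U) : pviPotential ![9, 1, 1, 1] t ((abscissa ∘ v) t) = 0 := by
    have hm := hmod t ht
    simpa only [Function.comp_apply, hm] using pviPotential_eq_zero
      (hm.trans_ne (ne_of_mem_of_not_mem ht hU0)) (hm.trans_ne (ne_of_mem_of_not_mem ht hU1))
  have h := (isPVISolution_zero_abscissa_comp hU hU0 hU1 hv hmod).add_smul hpot a
  simpa [mul_comm a] using h

end ThreeTorsion

open ThreeTorsion in
theorem stmt7_general (a : ℂ) {U : Set ℂ} (hU : IsOpen U) (hU0 : 0 ∉ U) (hU1 : 1 ∉ U)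
    {l : ℂ → ℂ} (hl : ContinuousOn l U) (heq : ∀ t ∈ U, (P t).eval (l t) = 0) :
    IsPVISolution ![9 * a, a, a, a] U l := by
  have hdup (t : ℂ) (ht : t ∈ U) :
      (l t ^ 2 - t) ^ 2 = 4 * l t * (l t * (l t - 1) * (l t - t)) :=
    (sub_eq_zero.mp ((eval_P t (l t)).symm.trans (heq t ht))).symm
  have hne (t : ℂ) (ht : t ∈ U) : l t ≠ 0 ∧ l t ≠ 1 ∧ l t ≠ t :=
    ne_of_duplication (ne_of_mem_of_not_mem ht hU0) (ne_of_mem_of_not_mem ht hU1) (hdup t ht)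
  have hparam : ContinuousOn (fun t => param t (l t)) U :=
    (hl.sub continuousOn_id).div (hl.mul (hl.sub continuousOn_const)) fun t ht =>
      mul_ne_zero (hne t ht).1 (sub_ne_zero.mpr (hne t ht).2.1)
  have hmod (t : ℂ) (ht : t ∈ U) : modulus (param t (l t)) = t :=
    have ⟨hx0, hx1, hxt⟩ := hne t ht
    modulus_param hx0 hx1 hxt (hdup t ht)
  refine (isPVISolution_abscissa_comp hU hU0 hU1 hparam hmod a).congr hU fun t ht => ?_
  obtain ⟨hx0, hx1, hxt⟩ := hne t ht
  exact abscissa_param hx0 hx1 hxt (hdup t ht)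

theorem stmt7 (a : ℂ)
    (U : Set ℂ) (hU : U.Nonempty) (hUopen : IsOpen U) (l : ℂ → ℂ)
    (hdiff : ∀ t ∈ U, DifferentiableAt ℂ l t)
    (hdiff2 : ∀ t ∈ U, DifferentiableAt ℂ (deriv l) t)
    (hreg : ∀ t ∈ U, t ≠ 0 ∧ t ≠ 1 ∧ l t ≠ 0 ∧ l t ≠ 1 ∧ l t ≠ t)
    (heq : ∀ t ∈ U, (P t).eval (l t) = 0)
    (hder : ∀ t ∈ U, (Polynomial.derivative (P t)).eval (l t) ≠ 0) :
    IsPVISolution ![9 * a, a, a, a] U l :=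
  stmt7_general a hUopen (fun h => (hreg 0 h).1 rfl) (fun h => (hreg 1 h).2.1 rfl)
    (fun t ht => (hdiff t ht).continuousAt.continuousWithinAt) heq
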